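/- arXiv:2003.02021 — 4 statements merged into one kernel-verified Lean document; each statement's English description precedes it below -/
import Mathlib

section
/- Let f : ℕ × ℕ → ℝ be strictly positive on ℕ² ∖ {(0,0)}, satisfy f(n,0) = f(0,n) = 1 for all n ≥ 1, and satisfy f(ν₀+ν₁, ν₂)·f(ν₁, ν₀) = f(ν₁, ν₀+ν₂)·f(ν₀, ν₂) for all (ν₀,ν₁,ν₂) ∈ ℕ³ ∖ {(0,0,0)}. Then f(n,1) = f(1,n) for every n ≥ 1. -/
/-!
On the plane `ν₁ = ν₂` the functional equation says that the ratio `f (a, b) / f (b, a)` is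
unchanged when `a` is replaced by `a + b`. Exchanging the arguments inverts this ratio, so the
property of being equal to `1` is preserved by both moves of the subtractive Euclidean algorithm.
That algorithm ends at a pair `(0, b)`, where the equation itself gives `f (0, b) = f (b, 0)`.
-/

theorem subtractive_euclid_induction {P : ℕ → ℕ → Prop} (zero_left : ∀ b, P 0 b)
    (symm : ∀ a b, P a b → P b a) (add_right : ∀ a b, b ≠ 0 → P a b → P (a + b) b) :
    ∀ a b, P a b
  | 0, b => zero_left b
  | a + 1, 0 => symm 0 (a + 1) (zero_left (a + 1))
  | a + 1, b + 1 => by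
    rcases Nat.le_total b a with hba | hab
    · obtain ⟨c, rfl⟩ := Nat.exists_eq_add_of_le' hba
      exact add_right c (b + 1) b.succ_ne_zero
        (subtractive_euclid_induction zero_left symm add_right c (b + 1))
    · obtain ⟨c, rfl⟩ := Nat.exists_eq_add_of_le' hab
      exact symm _ _ <| add_right c (a + 1) a.succ_ne_zero
        (subtractive_euclid_induction zero_left symm add_right c (a + 1))
  termination_by a b => a + b

theorem feith_symmetric_general {M : Type*} [Mul M] {f : ℕ × ℕ → M}
    (hreg : ∀ a b, b ≠ 0 → IsRegular (f (a, b)))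
    (heq : ∀ a b, b ≠ 0 → f (a + b, b) * f (b, a) = f (b, a + b) * f (a, b)) (m n : ℕ) :
    f (m, n) = f (n, m) := by
  induction m, n using subtractive_euclid_induction with
  | zero_left b =>
    rcases eq_or_ne b 0 with rfl | hb
    · rfl
    · have h : f (b, b) * f (b, 0) = f (b, b) * f (0, b) := by
        simpa only [zero_add] using heq 0 b hb
      exact ((hreg b b hb).left h).symm
  | symm a b hab => exact hab.symm
  | add_right a b hb hab =>
    have h : f (a + b, b) * f (a, b) = f (b, a + b) * f (a, b) := by
      simpa only [← hab] using heq a b hb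
    exact (hreg a b hb).right h

/-- A positive symmetric-equation solution satisfies `f(n,1) = f(1,n)` for `n ≥ 1`. -/
theorem feith_symmetric (f : ℕ × ℕ → ℝ)
    (hpos : ∀ a b : ℕ, (a, b) ≠ (0, 0) → 0 < f (a, b))
    (hbound : ∀ n : ℕ, 1 ≤ n → f (n, 0) = 1 ∧ f (0, n) = 1)
    (heq : ∀ ν₀ ν₁ ν₂ : ℕ, (ν₀, ν₁, ν₂) ≠ (0, 0, 0) →
      f (ν₀ + ν₁, ν₂) * f (ν₁, ν₀) = f (ν₁, ν₀ + ν₂) * f (ν₀, ν₂)) :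
    ∀ n : ℕ, 1 ≤ n → f (n, 1) = f (1, n) :=
  fun n _ => feith_symmetric_general
    (fun a b hb => .of_ne_zero (hpos a b (by simp [hb])).ne')
    (fun a b hb => heq a b b (by simp [hb])) n 1
end

section
/- Let q > 1 be a real number and define [m]_q := (q^m − 1)/(q − 1) and [m]_q! := [m]_q·[m−1]_q⋯[1]_q with [0]_q! := 1. Let s ≥ 1, let p : Fin s → ℝ be a probability vector (pᵢ ≥ 0, Σᵢ pᵢ = 1), and let k : ℕ → (Fin s → ℕ) be a sequence with Σᵢ k(n)(i) = n for every n and k(n)(i)/n → pᵢ as n → ∞ for every i. Then (1/n²)·ln( [n]_q!/∏ᵢ [k(n)(i)]_q! ) → (ln q / 2)·(1 − Σᵢ pᵢ²) as n → ∞; i.e., the Gaussian q-multinomial coefficient equals exp(n²·(ln q/2)·S₂(p) + o(n²)). -/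
open Filter

/-- The `q`-factorial `[m]_q! = [m]_q·[m−1]_q⋯[1]_q` with `[i]_q = (q^i − 1)/(q − 1)`
and `[0]_q! = 1`. -/
noncomputable def qfact (q : ℝ) (m : ℕ) : ℝ := ∏ i ∈ Finset.Icc 1 m, (q ^ i - 1) / (q - 1)

/-!
For `q > 1` the `q`-integer `[m + 1]_q` lies between `q ^ m` and `q ^ m * (q / (q - 1))`, so
`log [m]_q!` is `(m choose 2) * log q` up to an error between `0` and `m * log (q / (q - 1))`.
In `log ([n]_q! / ∏ i, [k i]_q!)` with `n = ∑ i, k i` the linear parts of the binomial coefficients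
cancel, which leaves `(log q / 2) * (n ^ 2 - ∑ i, k i ^ 2)`, that is `n ^ 2 * (log q / 2)` times the
quadratic entropy of `k / n`, with an error of at most `n * log (q / (q - 1))`. Dividing by `n ^ 2`
makes the error vanish in the limit.
-/

section QFactorial

variable {q : ℝ}

theorem qfact_zero (q : ℝ) : qfact q 0 = 1 := by
  simp [qfact]

theorem qfact_succ (q : ℝ) (m : ℕ) :
    qfact q (m + 1) = qfact q m * ((q ^ (m + 1) - 1) / (q - 1)) :=
  Finset.prod_Icc_succ_top (by lia) _

theorem pow_le_pow_succ_sub_one_div (hq : 1 < q) (m : ℕ) :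
    q ^ m ≤ (q ^ (m + 1) - 1) / (q - 1) := by
  have one_le_pow : 1 ≤ q ^ m := one_le_pow₀ hq.le
  rw [le_div_iff₀ (sub_pos.2 hq), pow_succ]
  linarith

theorem pow_succ_sub_one_div_le (hq : 1 < q) (m : ℕ) :
    (q ^ (m + 1) - 1) / (q - 1) ≤ q ^ m * (q / (q - 1)) := by
  rw [← mul_div_assoc, ← pow_succ]
  exact div_le_div_of_nonneg_right (sub_le_self _ zero_le_one) (sub_pos.2 hq).le

theorem pow_choose_two_le_qfact (hq : 1 < q) (m : ℕ) : q ^ m.choose 2 ≤ qfact q m := by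
  have q_pos : 0 < q := one_pos.trans hq
  induction m with
  | zero => simp [qfact_zero]
  | succ m ih =>
    calc q ^ (m + 1).choose 2 = q ^ m.choose 2 * q ^ m := by
          rw [Nat.choose_succ_succ' m 1, Nat.choose_one_right, pow_add, mul_comm]
      _ ≤ qfact q m * ((q ^ (m + 1) - 1) / (q - 1)) := by
          have factor_le := pow_le_pow_succ_sub_one_div hq m
          have qfact_nonneg : 0 ≤ qfact q m := (pow_pos q_pos _).le.trans ih
          gcongr
      _ = qfact q (m + 1) := (qfact_succ q m).symm

theorem qfact_pos (hq : 1 < q) (m : ℕ) : 0 < qfact q m :=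
  (pow_pos (one_pos.trans hq) _).trans_le (pow_choose_two_le_qfact hq m)

theorem qfact_le_pow_choose_two_mul_pow (hq : 1 < q) (m : ℕ) :
    qfact q m ≤ q ^ m.choose 2 * (q / (q - 1)) ^ m := by
  have q_pos : 0 < q := one_pos.trans hq
  have ratio_pos : 0 < q / (q - 1) := div_pos q_pos (sub_pos.2 hq)
  induction m with
  | zero => simp [qfact_zero]
  | succ m ih =>
    calc qfact q (m + 1) = qfact q m * ((q ^ (m + 1) - 1) / (q - 1)) := qfact_succ q m
      _ ≤ (q ^ m.choose 2 * (q / (q - 1)) ^ m) * (q ^ m * (q / (q - 1))) := by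
          have factor_nonneg : 0 ≤ (q ^ (m + 1) - 1) / (q - 1) :=
            (pow_pos q_pos m).le.trans (pow_le_pow_succ_sub_one_div hq m)
          exact mul_le_mul ih (pow_succ_sub_one_div_le hq m) factor_nonneg
            (mul_pos (pow_pos q_pos _) (pow_pos ratio_pos _)).le
      _ = q ^ (m + 1).choose 2 * (q / (q - 1)) ^ (m + 1) := by
          rw [Nat.choose_succ_succ' m 1, Nat.choose_one_right]
          ring

theorem log_qfact_sub_choose_two_mul_log_mem_Icc (hq : 1 < q) (m : ℕ) :
    Real.log (qfact q m) - m.choose 2 * Real.log q ∈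
      Set.Icc 0 (m * Real.log (q / (q - 1))) := by
  have q_pos : 0 < q := one_pos.trans hq
  have ratio_pos : 0 < q / (q - 1) := div_pos q_pos (sub_pos.2 hq)
  have lower := Real.log_le_log (pow_pos q_pos _) (pow_choose_two_le_qfact hq m)
  have upper := Real.log_le_log (qfact_pos hq m) (qfact_le_pow_choose_two_mul_pow hq m)
  rw [Real.log_pow] at lower
  rw [Real.log_mul (pow_pos q_pos _).ne' (pow_pos ratio_pos _).ne', Real.log_pow,
    Real.log_pow] at upper
  constructor <;> linarith

end QFactorial

section QMultinomial

variable {ι : Type*} [Fintype ι]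

/-- The Gaussian `q`-multinomial coefficient `[n]_q! / ∏ i, [k i]_q!`, whose upper entry is taken to
be `n = ∑ i, k i`. -/
noncomputable def qMultinomial (q : ℝ) (k : ι → ℕ) : ℝ :=
  qfact q (∑ i, k i) / ∏ i, qfact q (k i)

/-- The quadratic Tsallis entropy `S₂(p) = 1 - ∑ i, p i ^ 2`, defined for arbitrary real vectors so
that it is a continuous function on the whole space. -/
def quadraticTsallisEntropy (p : ι → ℝ) : ℝ :=
  1 - ∑ i, p i ^ 2

theorem continuous_quadraticTsallisEntropy :
    Continuous (quadraticTsallisEntropy : (ι → ℝ) → ℝ) := by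
  unfold quadraticTsallisEntropy
  fun_prop

theorem log_qMultinomial {q : ℝ} (hq : 1 < q) (k : ι → ℕ) :
    Real.log (qMultinomial q k) =
      Real.log (qfact q (∑ i, k i)) - ∑ i, Real.log (qfact q (k i)) := by
  rw [qMultinomial, Real.log_div (qfact_pos hq _).ne'
    (Finset.prod_pos fun i _ => qfact_pos hq (k i)).ne',
    Real.log_prod fun i _ => (qfact_pos hq (k i)).ne']

theorem choose_two_sum_sub_sum_choose_two (k : ι → ℕ) :
    ((∑ i, k i).choose 2 : ℝ) - ∑ i, ((k i).choose 2 : ℝ) =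
      ((∑ i, (k i : ℝ)) ^ 2 - ∑ i, (k i : ℝ) ^ 2) / 2 := by
  simp only [Nat.cast_choose_two, Nat.cast_sum, mul_sub, mul_one, ← sq, ← Finset.sum_div,
    Finset.sum_sub_distrib]
  ring

theorem sq_mul_quadraticTsallisEntropy_div {n : ℝ} (hn : n ≠ 0) (x : ι → ℝ) :
    n ^ 2 * quadraticTsallisEntropy (fun i => x i / n) = n ^ 2 - ∑ i, x i ^ 2 := by
  simp only [quadraticTsallisEntropy, div_pow, ← Finset.sum_div]
  field_simp

theorem abs_log_qMultinomial_sub_le {q : ℝ} (hq : 1 < q) (k : ι → ℕ) :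
    |Real.log (qMultinomial q k)
        - Real.log q / 2 * ((∑ i, (k i : ℝ)) ^ 2 - ∑ i, (k i : ℝ) ^ 2)| ≤
      (∑ i, (k i : ℝ)) * Real.log (q / (q - 1)) := by
  let error (m : ℕ) : ℝ := Real.log (qfact q m) - m.choose 2 * Real.log q
  have error_mem (m : ℕ) : error m ∈ Set.Icc 0 (m * Real.log (q / (q - 1))) :=
    log_qfact_sub_choose_two_mul_log_mem_Icc hq m
  have total_error_le := (error_mem (∑ i, k i)).2
  have sum_error_le : ∑ i, error (k i) ≤ (∑ i, (k i : ℝ)) * Real.log (q / (q - 1)) := by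
    rw [Finset.sum_mul]
    exact Finset.sum_le_sum fun i _ => (error_mem (k i)).2
  have log_sub_eq : Real.log (qMultinomial q k)
        - Real.log q / 2 * ((∑ i, (k i : ℝ)) ^ 2 - ∑ i, (k i : ℝ) ^ 2) =
      error (∑ i, k i) - ∑ i, error (k i) := by
    simp only [error, log_qMultinomial hq, Finset.sum_sub_distrib, ← Finset.sum_mul]
    linear_combination Real.log q * choose_two_sum_sub_sum_choose_two k
  rw [Nat.cast_sum] at total_error_le
  rw [log_sub_eq]
  exact abs_sub_le_of_nonneg_of_le (error_mem _).1 total_error_le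
    (Finset.sum_nonneg fun i _ => (error_mem (k i)).1) sum_error_le

theorem abs_log_qMultinomial_div_sq_sub_le {q : ℝ} (hq : 1 < q) {k : ι → ℕ} {n : ℕ}
    (hk : ∑ i, k i = n) (hn : n ≠ 0) :
    |1 / (n : ℝ) ^ 2 * Real.log (qMultinomial q k)
        - Real.log q / 2 * quadraticTsallisEntropy (fun i => (k i : ℝ) / n)| ≤
      Real.log (q / (q - 1)) / n := by
  have n_pos : (0 : ℝ) < n := by positivity
  have bound := abs_log_qMultinomial_sub_le hq k
  rw [← Nat.cast_sum, hk, ← sq_mul_quadraticTsallisEntropy_div n_pos.ne'] at bound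
  calc _ = |1 / (n : ℝ) ^ 2 * (Real.log (qMultinomial q k) - Real.log q / 2 *
            ((n : ℝ) ^ 2 * quadraticTsallisEntropy (fun i => (k i : ℝ) / n)))| := by
        congr 1
        field_simp
    _ = 1 / (n : ℝ) ^ 2 * |Real.log (qMultinomial q k) - Real.log q / 2 *
          ((n : ℝ) ^ 2 * quadraticTsallisEntropy (fun i => (k i : ℝ) / n))| := by
        rw [abs_mul, abs_of_pos (by positivity)]
    _ ≤ 1 / (n : ℝ) ^ 2 * (n * Real.log (q / (q - 1))) := by gcongr
    _ = Real.log (q / (q - 1)) / n := by field_simp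

theorem q_multinomial_quadratic_entropy_asymptotics_general {α : Type*} {l : Filter α}
    {q : ℝ} (hq : 1 < q) {p : ι → ℝ} {k : α → ι → ℕ} {n : α → ℕ}
    (hk : ∀ a, ∑ i, k a i = n a) (hn : Tendsto n l atTop)
    (hconv : ∀ i, Tendsto (fun a => (k a i : ℝ) / (n a : ℝ)) l (nhds (p i))) :
    Tendsto (fun a => 1 / (n a : ℝ) ^ 2 * Real.log (qMultinomial q (k a))) l
      (nhds (Real.log q / 2 * quadraticTsallisEntropy p)) := by
  have entropy_tendsto :
      Tendsto (fun a => Real.log q / 2 * quadraticTsallisEntropy fun i => (k a i : ℝ) / n a) l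
        (nhds (Real.log q / 2 * quadraticTsallisEntropy p)) :=
    ((continuous_quadraticTsallisEntropy.tendsto p).comp (tendsto_pi_nhds.2 hconv)).const_mul _
  have bound_tendsto : Tendsto (fun a => Real.log (q / (q - 1)) / (n a : ℝ)) l (nhds 0) :=
    (tendsto_const_div_atTop_nhds_zero_nat _).comp hn
  have error_tendsto : Tendsto (fun a => 1 / (n a : ℝ) ^ 2 * Real.log (qMultinomial q (k a))
      - Real.log q / 2 * quadraticTsallisEntropy fun i => (k a i : ℝ) / n a) l (nhds 0) := by
    refine squeeze_zero_norm' ?_ bound_tendsto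
    filter_upwards [hn.eventually_ne_atTop 0] with a n_ne_zero
    exact abs_log_qMultinomial_div_sq_sub_le hq (hk a) n_ne_zero
  simpa only [sub_add_cancel, zero_add] using error_tendsto.add entropy_tendsto

end QMultinomial

/-- Asymptotic relation between Gaussian `q`-multinomial coefficients and the
quadratic Tsallis entropy `S₂(p) = 1 − Σᵢ pᵢ²`:
`(1/n²)·ln [n; k(n)]_q → (ln q/2)·S₂(p)` whenever `k(n)/n → p`. -/
theorem q_multinomial_quadratic_entropy_asymptotics
    (q : ℝ) (hq : 1 < q) (s : ℕ) (hs : 1 ≤ s)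
    (p : Fin s → ℝ) (hp : ∀ i, 0 ≤ p i) (hsum : ∑ i, p i = 1)
    (k : ℕ → Fin s → ℕ) (hk : ∀ n, ∑ i, k n i = n)
    (hconv : ∀ i, Tendsto (fun n : ℕ => (k n i : ℝ) / (n : ℝ)) atTop (nhds (p i))) :
    Tendsto
      (fun n : ℕ => (1 / (n : ℝ) ^ 2) *
        Real.log (qfact q n / ∏ i, qfact q (k n i)))
      atTop (nhds ((Real.log q / 2) * (1 - ∑ i, p i ^ 2))) := by
  simpa only [qMultinomial, quadraticTsallisEntropy, hk] using
    q_multinomial_quadratic_entropy_asymptotics_general hq hk tendsto_id hconv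
end

section
/- Let α > 0 with α ≠ 1, K ∈ ℝ, and define the admissible sequence D(n) := exp(K·(n^{α−1} − 1)) for n ≥ 1. Let s ≥ 1, let p : Fin s → ℝ be a probability vector (pᵢ ≥ 0, Σᵢ pᵢ = 1), and let k : ℕ → (Fin s → ℕ) be a sequence with Σᵢ k(n)(i) = n for every n and k(n)(i)/n → pᵢ as n → ∞ for every i. Then (1/n^α)·ln( [n]_D!/∏ᵢ [k(n)(i)]_D! ) → (K/α)·(1 − Σᵢ pᵢ^α) as n → ∞; in particular the limit is a scalar multiple (by K(α−1)/α) of the Tsallis α-entropy S_α(p) = (Σᵢ pᵢ^α − 1)/(1−α). -/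
open Filter

/-- The `D`-factorial `[n]_D! = D n * D (n-1) * ⋯ * D 1`, with `[0]_D! = 1`. -/
noncomputable def Dfact (D : ℕ → ℝ) (n : ℕ) : ℝ := ∏ i ∈ Finset.Icc 1 n, D i

/-!
Since `∑ i, k i = n`, adding a constant `a` to every `log (D m)` does not change `log W_D(n; k)`,
so that `log W_D(n; k) = S n - ∑ i, S (k i)`, where `S` is the partial sum of `log (D m) + a`.
If `(log (D m) + a) / m ^ (α - 1) → K` (for the theorem, `a = K`), then the ratio of these terms
to the increments `m ^ α - (m - 1) ^ α ∼ α m ^ (α - 1)` tends to `K / α`, and Stolz–Cesàro gives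
`S m / m ^ α → K / α`. Hence `S (k i) / n ^ α → (K / α) p i ^ α`.
-/

open Asymptotics Topology

theorem tendsto_sum_div_sum_of_tendsto_div {a b : ℕ → ℝ} {c : ℝ} (hb : ∀ i, 0 < b i)
    (hsum : Tendsto (fun n => ∑ i ∈ Finset.range n, b i) atTop atTop)
    (h : Tendsto (fun i => a i / b i) atTop (𝓝 c)) :
    Tendsto (fun n => (∑ i ∈ Finset.range n, a i) / ∑ i ∈ Finset.range n, b i) atTop (𝓝 c) := by
  have hterm : (fun i => a i - c * b i) =o[atTop] b := by
    refine (isLittleO_iff_tendsto fun i hi => absurd hi (hb i).ne').2 ?_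
    refine (tendsto_sub_nhds_zero_iff.2 h).congr fun i => ?_
    rw [sub_div, mul_div_cancel_right₀ _ (hb i).ne']
  have hpartial := (hterm.sum_range (fun i => (hb i).le) hsum).tendsto_div_nhds_zero
  refine tendsto_sub_nhds_zero_iff.1 (hpartial.congr' ?_)
  filter_upwards [hsum.eventually_ne_atTop 0] with n hn
  rw [Finset.sum_sub_distrib, ← Finset.mul_sum, sub_div, mul_div_cancel_right₀ _ hn]

theorem tendsto_rpow_sub_rpow_sub_one_div (α : ℝ) :
    Tendsto (fun x : ℝ => (x ^ α - (x - 1) ^ α) / x ^ (α - 1)) atTop (𝓝 α) := by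
  -- By homogeneity, the quotient is the slope of `y ^ α` between `1` and `1 - 1 / x`.
  have hslope : Tendsto (slope (fun y : ℝ => y ^ α) 1) (𝓝[≠] 1) (𝓝 α) := by
    simpa using (Real.hasDerivAt_rpow_const (x := 1) (p := α) (Or.inl one_ne_zero)).tendsto_slope
  have hpoint : Tendsto (fun x : ℝ => 1 - x⁻¹) atTop (𝓝[≠] 1) := by
    refine tendsto_nhdsWithin_iff.2 ⟨by simpa using tendsto_inv_atTop_zero.const_sub (1 : ℝ), ?_⟩
    filter_upwards [eventually_gt_atTop 0] with x hx
    simpa using hx.ne'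
  refine (hslope.comp hpoint).congr' ?_
  filter_upwards [eventually_ge_atTop 1] with x hx
  have hx0 : 0 < x := by linarith
  have hscale : (1 - x⁻¹) ^ α = (x - 1) ^ α / x ^ α := by
    rw [← Real.div_rpow (by linarith) hx0.le, sub_div, div_self hx0.ne', one_div]
  rw [Function.comp_apply, slope_def_field, hscale, Real.one_rpow, Real.rpow_sub_one hx0.ne']
  field_simp
  ring

variable {α : ℝ}

theorem tendsto_sum_Icc_div_rpow (hα : 0 < α) {g : ℕ → ℝ} {c : ℝ}
    (hg : Tendsto (fun n : ℕ => g n / (n : ℝ) ^ (α - 1)) atTop (𝓝 c)) :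
    Tendsto (fun n : ℕ => (∑ i ∈ Finset.Icc 1 n, g i) / (n : ℝ) ^ α) atTop (𝓝 (c / α)) := by
  let b : ℕ → ℝ := fun i => ((i + 1 : ℕ) : ℝ) ^ α - (i : ℝ) ^ α
  have hb : ∀ i, 0 < b i := fun i => sub_pos.2 <|
    Real.rpow_lt_rpow i.cast_nonneg (Nat.cast_lt.2 i.lt_succ_self) hα
  have hsum : ∀ n, ∑ i ∈ Finset.range n, b i = (n : ℝ) ^ α := fun n => by
    rw [Finset.sum_range_sub fun i : ℕ => (i : ℝ) ^ α, Nat.cast_zero, Real.zero_rpow hα.ne',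
      sub_zero]
  have hincr : Tendsto (fun i : ℕ => b i / ((i + 1 : ℕ) : ℝ) ^ (α - 1)) atTop (𝓝 α) := by
    refine ((tendsto_rpow_sub_rpow_sub_one_div α).comp
      (tendsto_natCast_atTop_atTop.comp (tendsto_add_atTop_nat 1))).congr fun i => ?_
    simp [b]
  have hratio : Tendsto (fun i => g (i + 1) / b i) atTop (𝓝 (c / α)) := by
    refine (((tendsto_add_atTop_iff_nat 1).2 hg).div hincr hα.ne').congr fun i => ?_
    exact div_div_div_cancel_right₀ (by positivity) _ _
  have hatTop : Tendsto (fun n => ∑ i ∈ Finset.range n, b i) atTop atTop := by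
    simp only [hsum]
    exact (tendsto_rpow_atTop hα).comp tendsto_natCast_atTop_atTop
  refine (tendsto_sum_div_sum_of_tendsto_div hb hatTop hratio).congr fun n => ?_
  rw [hsum, Finset.range_eq_Ico, Finset.sum_Ico_add', zero_add, Finset.Ico_add_one_right_eq_Icc]

variable {β : Type*} {l : Filter β} {N : β → ℕ}

theorem tendsto_comp_div_rpow (hα : 0 < α) {S : ℕ → ℝ} {c q : ℝ} (hS0 : S 0 = 0)
    (hS : Tendsto (fun m : ℕ => S m / (m : ℝ) ^ α) atTop (𝓝 c)) {k : β → ℕ}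
    (hN : Tendsto N l atTop) (hk : Tendsto (fun b => (k b : ℝ) / N b) l (𝓝 q)) :
    Tendsto (fun b => S (k b) / (N b : ℝ) ^ α) l (𝓝 (c * q ^ α)) := by
  have hpow : Tendsto (fun b => ((k b : ℝ) / N b) ^ α) l (𝓝 (q ^ α)) :=
    hk.rpow_const (Or.inr hα.le)
  have hfactor : ∀ b, S (k b) / (k b : ℝ) ^ α * ((k b : ℝ) / N b) ^ α =
      S (k b) / (N b : ℝ) ^ α := fun b => by
    rw [Real.div_rpow (k b).cast_nonneg (N b).cast_nonneg]
    rcases eq_or_ne (k b) 0 with h0 | h0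
    · simp [h0, hS0]
    · exact div_mul_div_cancel₀ (by positivity)
  refine Tendsto.congr hfactor ?_
  rcases eq_or_ne q 0 with rfl | hq
  · -- `k` need not tend to infinity here, but `S m / m ^ α` is bounded.
    rw [Real.zero_rpow hα.ne'] at hpow ⊢
    rw [mul_zero]
    obtain ⟨C, hC⟩ := (Metric.isBounded_range_of_tendsto _ hS).exists_norm_le
    exact isBoundedUnder_le_mul_tendsto_zero
      (isBoundedUnder_of ⟨C, fun b => hC _ ⟨k b, rfl⟩⟩) hpow
  · have hk_atTop : Tendsto k l atTop := by
      refine tendsto_natCast_atTop_iff (R := ℝ).1 ?_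
      refine (hk.norm.pos_mul_atTop (norm_pos_iff.2 hq)
        (tendsto_natCast_atTop_atTop.comp hN)).congr' ?_
      filter_upwards [hN.eventually_ge_atTop 1] with b hb
      have hb0 : (N b : ℝ) ≠ 0 := by positivity
      rw [Real.norm_of_nonneg (by positivity), Function.comp_apply, div_mul_cancel₀ _ hb0]
    exact (hS.comp hk_atTop).mul hpow

variable {ι : Type*} [Fintype ι] {k : β → ι → ℕ} {p : ι → ℝ}

theorem tendsto_sub_sum_comp_div_rpow (hα : 0 < α) {S : ℕ → ℝ} {c : ℝ} (hS0 : S 0 = 0)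
    (hS : Tendsto (fun m : ℕ => S m / (m : ℝ) ^ α) atTop (𝓝 c)) (hN : Tendsto N l atTop)
    (hk : ∀ i, Tendsto (fun b => (k b i : ℝ) / N b) l (𝓝 (p i))) :
    Tendsto (fun b => (S (N b) - ∑ i, S (k b i)) / (N b : ℝ) ^ α) l
      (𝓝 (c * (1 - ∑ i, p i ^ α))) := by
  have hparts := tendsto_finsetSum Finset.univ fun i _ => tendsto_comp_div_rpow hα hS0 hS hN (hk i)
  simpa only [Function.comp_def, sub_div, Finset.sum_div, mul_sub, mul_one, Finset.mul_sum]
    using (hS.comp hN).sub hparts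

theorem Dfact_pos {D : ℕ → ℝ} (hD : ∀ n, 1 ≤ n → 0 < D n) (n : ℕ) : 0 < Dfact D n :=
  Finset.prod_pos fun i hi => hD i (Finset.mem_Icc.1 hi).1

theorem log_Dfact_add_mul {D : ℕ → ℝ} (hD : ∀ n, 1 ≤ n → 0 < D n) (a : ℝ) (n : ℕ) :
    Real.log (Dfact D n) + a * n = ∑ i ∈ Finset.Icc 1 n, (Real.log (D i) + a) := by
  rw [Dfact, Real.log_prod fun i hi => (hD i (Finset.mem_Icc.1 hi).1).ne',
    Finset.sum_add_distrib, Finset.sum_const, Nat.card_Icc, add_tsub_cancel_right,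
    nsmul_eq_mul, mul_comm a]

theorem log_Dfact_div_prod_Dfact {D : ℕ → ℝ} (hD : ∀ n, 1 ≤ n → 0 < D n) (a : ℝ) {n : ℕ}
    {k : ι → ℕ} (hk : ∑ i, k i = n) :
    Real.log (Dfact D n / ∏ i, Dfact D (k i)) =
      (∑ j ∈ Finset.Icc 1 n, (Real.log (D j) + a)) -
        ∑ i, ∑ j ∈ Finset.Icc 1 (k i), (Real.log (D j) + a) := by
  have hne : ∀ m, Dfact D m ≠ 0 := fun m => (Dfact_pos hD m).ne'
  rw [Real.log_div (hne n) (Finset.prod_ne_zero_iff.2 fun i _ => hne (k i)),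
    Real.log_prod fun i _ => hne (k i)]
  simp only [← log_Dfact_add_mul hD a, Finset.sum_add_distrib, ← Finset.mul_sum]
  rw [← hk, Nat.cast_sum]
  ring

theorem fontene_ward_tsallis_asymptotics_general (hα : 0 < α) {K a : ℝ} {D : ℕ → ℝ}
    (hD : ∀ n, 1 ≤ n → 0 < D n)
    (hDlim : Tendsto (fun n : ℕ => (Real.log (D n) + a) / (n : ℝ) ^ (α - 1)) atTop (𝓝 K))
    (hN : Tendsto N l atTop) (hk : ∀ b, ∑ i, k b i = N b)
    (hconv : ∀ i, Tendsto (fun b => (k b i : ℝ) / N b) l (𝓝 (p i))) :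
    Tendsto (fun b => 1 / (N b : ℝ) ^ α *
        Real.log (Dfact D (N b) / ∏ i, Dfact D (k b i))) l
      (𝓝 (K / α * (1 - ∑ i, p i ^ α))) := by
  refine (tendsto_sub_sum_comp_div_rpow hα (by simp) (tendsto_sum_Icc_div_rpow hα hDlim)
    hN hconv).congr fun b => ?_
  rw [log_Dfact_div_prod_Dfact hD a (hk b), one_div_mul_eq_div]

theorem tendsto_log_add_div_rpow_of_eq_exp {K : ℝ} {D : ℕ → ℝ}
    (hD : ∀ n : ℕ, 1 ≤ n → D n = Real.exp (K * ((n : ℝ) ^ (α - 1) - 1))) :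
    Tendsto (fun n : ℕ => (Real.log (D n) + K) / (n : ℝ) ^ (α - 1)) atTop (𝓝 K) := by
  refine tendsto_const_nhds.congr' ?_
  filter_upwards [eventually_ge_atTop 1] with n hn
  have hpow : (n : ℝ) ^ (α - 1) ≠ 0 := by positivity
  rw [hD n hn, Real.log_exp, mul_sub_one, sub_add_cancel, mul_div_cancel_right₀ _ hpow]

/-- For the admissible sequence `D(n) = exp(K(n^{α−1} − 1))`, the Fontené–Ward
multinomial coefficients are asymptotically related to the Tsallis α-entropy:
`(1/n^α)·ln W_D(n; k(n)) → (K/α)·(1 − Σᵢ pᵢ^α)` whenever `k(n)/n → p`.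
Powers are real powers (`rpow`). -/
theorem fontene_ward_tsallis_asymptotics
    (α : ℝ) (hα : 0 < α) (hα1 : α ≠ 1) (K : ℝ)
    (D : ℕ → ℝ) (hD : ∀ n : ℕ, 1 ≤ n → D n = Real.exp (K * ((n : ℝ) ^ (α - 1) - 1)))
    (s : ℕ) (hs : 1 ≤ s)
    (p : Fin s → ℝ) (hp : ∀ i, 0 ≤ p i) (hsum : ∑ i, p i = 1)
    (k : ℕ → Fin s → ℕ) (hk : ∀ n, ∑ i, k n i = n)
    (hconv : ∀ i, Tendsto (fun n : ℕ => (k n i : ℝ) / (n : ℝ)) atTop (nhds (p i))) :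
    Tendsto
      (fun n : ℕ => (1 / (n : ℝ) ^ α) *
        Real.log (Dfact D n / ∏ i, Dfact D (k n i)))
      atTop (nhds ((K / α) * (1 - ∑ i, p i ^ α))) :=
  fontene_ward_tsallis_asymptotics_general hα (fun n hn => hD n hn ▸ Real.exp_pos _)
    (tendsto_log_add_div_rpow_of_eq_exp hD) tendsto_id hk hconv
end

section
/- Let A, B, W be finite types with an injective map ι : W → A × B, and fix α > 0. For ν : W → ℕ let ‖ν‖ := Σ_w ν(w), X_*ν(a) := Σ_{w : (ι w).1 = a} ν(w), ν|_{X=a} := ν·𝟙_{\{w : (ι w).1 = a\}}, and Y_*ν(b) := Σ_{w : (ι w).2 = b} ν(w); define marginals and conditionals of probabilities on W analogously, with p|_{X=a}(w) := p(w)·𝟙_{(ι w).1 = a}/X_*p(a) when X_*p(a) > 0. Suppose ψ_W, ψ_A, ψ_B are strictly positive functions on the nonzero counting functions of W, A, B respectively, satisfying the 1-cocycle identity ψ_W(ν) = ( ∏_{a ∈ A, X_*ν(a) ≠ 0} ψ_B( Y_*(ν|_{X=a}) ) ) · ψ_A(X_*ν) for all ν ≠ 0. Suppose further that φ_W, φ_A,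 φ_B are real-valued functions on the probabilities of W, A, B respectively such that, for each of the three pairs (ψ, φ), whenever a sequence of counting functions ν_n satisfies ‖ν_n‖ → ∞ and ν_n(·)/‖ν_n‖ → p pointwise, one has ln ψ(ν_n)/‖ν_n‖^α → φ(p). Then for every probability p on W: φ_W(p) = Σ_{a ∈ A, X_*p(a) > 0} (X_*p(a))^α · φ_B( Y_*(p|_{X=a}) ) + φ_A(X_*p); i.e., φ satisfies the α-deformed chain rule (is a probabilistic 1-cocycle of type α). -/
open Finset Filter

/-!
Given a probability `p`, the counting functions `ν_n = ⌊n p⌋` have frequencies converging to `p`,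
and so do their images under `X` and, over every `a` with `X_*p(a) > 0`, the images under `Y` of
their restrictions to the fiber `X = a`. Taking logarithms in the cocycle identity for `ν_n` and
dividing by `‖ν_n‖^α` gives
`ln ψ_W(ν_n) / ‖ν_n‖^α = ∑_a (X_*ν_n(a) / ‖ν_n‖)^α · ln ψ_B(Y_*(ν_n|_{X=a})) / X_*ν_n(a)^α
  + ln ψ_A(X_*ν_n) / ‖ν_n‖^α`,
whose limit is the chain rule. A fiber that is null for `p` could contribute an uncontrolled term to
the sum; flooring excludes this, because it keeps the support of `ν_n` inside that of `p`.
-/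

theorem exists_sum_fiber_ne_zero {A W M : Type*} [DecidableEq A] [AddCommMonoid M] (X : W → A)
    {ν : W → M} {s : Finset W} (hs : ∑ w ∈ s, ν w ≠ 0) :
    ∃ a, ∑ w ∈ s with X w = a, ν w ≠ 0 := by
  rw [← sum_fiberwise_of_maps_to (fun w hw => mem_image_of_mem X hw) ν] at hs
  obtain ⟨a, -, ha⟩ := exists_ne_zero_of_sum_ne_zero hs
  exact ⟨a, ha⟩

section Pushforward

variable {A B W M : Type*} [Fintype W] [DecidableEq A] [DecidableEq B] [AddCommMonoid M]

/-- The image `X_*ν` under `X` of a counting function or of a probability `ν`: sum over the fibers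
of `X`. -/
def pushforward (X : W → A) (ν : W → M) (a : A) : M :=
  ∑ w with X w = a, ν w

/-- The image `Y_*(ν·𝟙_{X=a})` under `Y` of the restriction of `ν` to the fiber of `X` over `a`.
It is not normalized: for a probability `p`, the conditional law `Y_*(p|_{X=a})` is its quotient by
`pushforward X p a`. -/
def fiberPushforward (X : W → A) (Y : W → B) (a : A) (ν : W → M) (b : B) : M :=
  ∑ w with X w = a ∧ Y w = b, ν w

theorem sum_pushforward [Fintype A] (X : W → A) (ν : W → M) :
    ∑ a, pushforward X ν a = ∑ w, ν w :=
  sum_fiberwise _ _ _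

theorem sum_fiberPushforward [Fintype B] (X : W → A) (Y : W → B) (a : A) (ν : W → M) :
    ∑ b, fiberPushforward X Y a ν b = pushforward X ν a := by
  simp only [fiberPushforward, pushforward, ← filter_filter]
  exact sum_fiberwise _ _ _

theorem pushforward_ne_zero (X : W → A) {ν : W → M} (hν : ∑ w, ν w ≠ 0) :
    pushforward X ν ≠ 0 :=
  Function.ne_iff.2 (exists_sum_fiber_ne_zero X hν)

theorem fiberPushforward_ne_zero {X : W → A} (Y : W → B) {a : A} {ν : W → M}
    (ha : pushforward X ν a ≠ 0) : fiberPushforward X Y a ν ≠ 0 := by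
  obtain ⟨b, hb⟩ := exists_sum_fiber_ne_zero Y ha
  rw [filter_filter] at hb
  exact Function.ne_iff.2 ⟨b, hb⟩

variable {N : Type*} [AddCommMonoid N] [PartialOrder N] [IsOrderedAddMonoid N]

theorem pushforward_nonneg (X : W → A) {p : W → N} (hp : ∀ w, 0 ≤ p w) (a : A) :
    0 ≤ pushforward X p a :=
  sum_nonneg fun w _ => hp w

theorem pushforward_eq_zero_of_support_subset {X : W → A} {ν : W → M} {p : W → N}
    (hp : ∀ w, 0 ≤ p w) (hsupp : Function.support ν ⊆ Function.support p) {a : A}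
    (ha : pushforward X p a = 0) : pushforward X ν a = 0 := by
  refine sum_eq_zero fun w hw => Function.notMem_support.1 fun hνw => hsupp hνw ?_
  exact (sum_eq_zero_iff_of_nonneg fun w _ => hp w).1 ha w hw

end Pushforward

/-- The counting functions `ν n` have magnitude tending to infinity and frequencies `ν n / ‖ν n‖`
tending pointwise to `p`. -/
structure EmpiricalLimit {E : Type*} [Fintype E] (ν : ℕ → E → ℕ) (p : E → ℝ) : Prop where
  tendsto_magnitude : Tendsto (fun n => ∑ x, ν n x) atTop atTop
  tendsto_frequency :
    ∀ x, Tendsto (fun n => (ν n x : ℝ) / ((∑ u, ν n u : ℕ) : ℝ)) atTop (nhds (p x))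

namespace EmpiricalLimit

variable {A B E W : Type*} [Fintype E] [Fintype W] [DecidableEq A] [DecidableEq B]

section Basic

variable {ν : ℕ → E → ℕ} {p : E → ℝ}

theorem tendsto_sum_frequency (h : EmpiricalLimit ν p) (s : Finset E) :
    Tendsto (fun n => ((∑ x ∈ s, ν n x : ℕ) : ℝ) / ((∑ x, ν n x : ℕ) : ℝ)) atTop
      (nhds (∑ x ∈ s, p x)) := by
  simpa only [Nat.cast_sum s, sum_div] using
    tendsto_finsetSum s fun x _ => h.tendsto_frequency x

theorem eventually_magnitude_ne_zero (h : EmpiricalLimit ν p) :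
    ∀ᶠ n in atTop, ∑ x, ν n x ≠ 0 :=
  h.tendsto_magnitude.eventually_ne_atTop 0

theorem mem_stdSimplex (h : EmpiricalLimit ν p) : p ∈ stdSimplex ℝ E := by
  refine ⟨fun x => ge_of_tendsto' (h.tendsto_frequency x) fun n => by positivity, ?_⟩
  refine tendsto_nhds_unique (h.tendsto_sum_frequency univ) (tendsto_const_nhds.congr' ?_)
  filter_upwards [h.eventually_magnitude_ne_zero] with n hn
  exact (div_self (Nat.cast_ne_zero.2 hn)).symm

theorem of_tendsto_div {r : ℕ → ℝ} {q : E → ℝ} (hr : Tendsto r atTop atTop)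
    (hq : 0 < ∑ x, q x) (hν : ∀ x, Tendsto (fun n => (ν n x : ℝ) / r n) atTop (nhds (q x))) :
    EmpiricalLimit ν (fun x => q x / ∑ y, q y) := by
  have hsum : Tendsto (fun n => ((∑ x, ν n x : ℕ) : ℝ) / r n) atTop (nhds (∑ x, q x)) := by
    simpa only [Nat.cast_sum, sum_div] using tendsto_finsetSum univ fun x _ => hν x
  refine ⟨?_, fun x => ?_⟩
  · rw [← tendsto_natCast_atTop_iff (R := ℝ)]
    refine (hsum.pos_mul_atTop hq hr).congr' ?_
    filter_upwards [hr.eventually_ne_atTop 0] with n hn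
    exact div_mul_cancel₀ _ hn
  · refine ((hν x).div hsum hq.ne').congr' ?_
    filter_upwards [hr.eventually_ne_atTop 0] with n hn
    exact div_div_div_cancel_right₀ hn _ _

end Basic

variable {ν : ℕ → W → ℕ} {p : W → ℝ}

theorem map [Fintype A] (h : EmpiricalLimit ν p) (X : W → A) :
    EmpiricalLimit (fun n => pushforward X (ν n)) (pushforward X p) where
  tendsto_magnitude := by simpa only [sum_pushforward] using h.tendsto_magnitude
  tendsto_frequency a := by
    simpa only [sum_pushforward] using! h.tendsto_sum_frequency {w | X w = a}

theorem map_fiber [Fintype B] (h : EmpiricalLimit ν p) {X : W → A} (Y : W → B) {a : A}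
    (ha : 0 < pushforward X p a) :
    EmpiricalLimit (fun n => fiberPushforward X Y a (ν n))
      (fun b => fiberPushforward X Y a p b / pushforward X p a) := by
  rw [← sum_fiberPushforward X Y] at ha ⊢
  exact of_tendsto_div (tendsto_natCast_atTop_atTop.comp h.tendsto_magnitude) ha
    fun b => h.tendsto_sum_frequency {w | X w = a ∧ Y w = b}

theorem eventually_pushforward_ne_zero_iff [Finite A] (h : EmpiricalLimit ν p)
    (hsupp : ∀ n, Function.support (ν n) ⊆ Function.support p) (X : W → A) :
    ∀ᶠ n in atTop, ∀ a, pushforward X (ν n) a ≠ 0 ↔ 0 < pushforward X p a := by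
  have hp := h.mem_stdSimplex.1
  refine eventually_all.2 fun a => ?_
  rcases (pushforward_nonneg X hp a).eq_or_lt' with ha | ha
  · refine .of_forall fun n => iff_of_false (not_not.2 ?_) ha.not_gt
    exact pushforward_eq_zero_of_support_subset hp (hsupp n) ha
  · filter_upwards [(h.tendsto_sum_frequency {w | X w = a}).eventually_ne ha.ne'] with n hn
    exact iff_of_true (Nat.cast_ne_zero.1 (div_ne_zero_iff.1 hn).1) ha

end EmpiricalLimit

theorem exists_empiricalLimit_support_subset {E : Type*} [Fintype E] {p : E → ℝ}
    (hp : p ∈ stdSimplex ℝ E) :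
    ∃ ν : ℕ → E → ℕ, EmpiricalLimit ν p ∧ ∀ n, Function.support (ν n) ⊆ Function.support p := by
  refine ⟨fun n x => ⌊p x * n⌋₊, ?_, fun n x hx hpx => hx (by simp [hpx])⟩
  have hsum : 0 < ∑ x, p x := hp.2 ▸ one_pos
  simpa only [hp.2, div_one] using EmpiricalLimit.of_tendsto_div tendsto_natCast_atTop_atTop hsum
    fun x => (tendsto_nat_floor_mul_div_atTop (hp.1 x)).comp tendsto_natCast_atTop_atTop

/-- `φ` is the `α`-normalized logarithmic limit of `ψ`: `ln ψ(ν_n) / ‖ν_n‖^α → φ(p)` whenever the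
frequencies of `ν_n` tend to the probability `p` and `‖ν_n‖ → ∞`. -/
def IsLogLimit {E : Type*} [Fintype E] (α : ℝ) (ψ : (E → ℕ) → ℝ) (φ : (E → ℝ) → ℝ) : Prop :=
  ∀ p : E → ℝ, (∀ x, 0 ≤ p x) → ∑ x, p x = 1 → ∀ ν : ℕ → E → ℕ,
    Tendsto (fun n => ∑ x, ν n x) atTop atTop →
    (∀ x, Tendsto (fun n => (ν n x : ℝ) / ((∑ u, ν n u : ℕ) : ℝ)) atTop (nhds (p x))) →
    Tendsto (fun n => Real.log (ψ (ν n)) / ((∑ u, ν n u : ℕ) : ℝ) ^ α) atTop (nhds (φ p))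

theorem IsLogLimit.tendsto {E : Type*} [Fintype E] {α : ℝ} {ψ : (E → ℕ) → ℝ} {φ : (E → ℝ) → ℝ}
    (hψ : IsLogLimit α ψ φ) {ν : ℕ → E → ℕ} {p : E → ℝ} (hν : EmpiricalLimit ν p) :
    Tendsto (fun n => Real.log (ψ (ν n)) / ((∑ u, ν n u : ℕ) : ℝ) ^ α) atTop (nhds (φ p)) :=
  hψ p hν.mem_stdSimplex.1 hν.mem_stdSimplex.2 ν hν.tendsto_magnitude hν.tendsto_frequency

section Cocycle

variable {A B W : Type*} [Fintype A] [Fintype W] [DecidableEq A] [DecidableEq B]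
  {X : W → A} {Y : W → B} {α : ℝ}
  {ψW : (W → ℕ) → ℝ} {ψA : (A → ℕ) → ℝ} {ψB : (B → ℕ) → ℝ}
  {φW : (W → ℝ) → ℝ} {φA : (A → ℝ) → ℝ} {φB : (B → ℝ) → ℝ}

/-- The combinatorial 1-cocycle identity `ψ_W(ν) = (∏_a ψ_B(Y_*(ν|_{X=a}))) · ψ_A(X_*ν)`, the
product running over the `a` with `X_*ν(a) ≠ 0`. -/
def IsCombinatorialCocycle (X : W → A) (Y : W → B) (ψW : (W → ℕ) → ℝ) (ψA : (A → ℕ) → ℝ)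
    (ψB : (B → ℕ) → ℝ) : Prop :=
  ∀ ν : W → ℕ, ν ≠ 0 →
    ψW ν = (∏ a with pushforward X ν a ≠ 0, ψB (fiberPushforward X Y a ν)) * ψA (pushforward X ν)

namespace IsCombinatorialCocycle

theorem log_eq (hψ : IsCombinatorialCocycle X Y ψW ψA ψB) (hψA : ∀ ν, ν ≠ 0 → ψA ν ≠ 0)
    (hψB : ∀ ν, ν ≠ 0 → ψB ν ≠ 0) {ν : W → ℕ} (hν : ∑ w, ν w ≠ 0) :
    Real.log (ψW ν) = ∑ a with pushforward X ν a ≠ 0, Real.log (ψB (fiberPushforward X Y a ν)) +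
      Real.log (ψA (pushforward X ν)) := by
  have hB : ∀ a ∈ ({a | pushforward X ν a ≠ 0} : Finset A), ψB (fiberPushforward X Y a ν) ≠ 0 :=
    fun a ha => hψB _ (fiberPushforward_ne_zero Y (mem_filter.1 ha).2)
  have hν0 : ν ≠ 0 := by
    rintro rfl
    simp at hν
  rw [hψ ν hν0, Real.log_mul (prod_ne_zero_iff.2 hB) (hψA _ (pushforward_ne_zero X hν)),
    Real.log_prod hB]

theorem log_div_rpow_eq (hψ : IsCombinatorialCocycle X Y ψW ψA ψB)
    (hψA : ∀ ν, ν ≠ 0 → ψA ν ≠ 0) (hψB : ∀ ν, ν ≠ 0 → ψB ν ≠ 0) (α : ℝ) {ν : W → ℕ}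
    (hν : ∑ w, ν w ≠ 0) :
    Real.log (ψW ν) / ((∑ w, ν w : ℕ) : ℝ) ^ α =
      ∑ a with pushforward X ν a ≠ 0, (((pushforward X ν a : ℕ) : ℝ) / ((∑ w, ν w : ℕ) : ℝ)) ^ α *
        (Real.log (ψB (fiberPushforward X Y a ν)) / ((pushforward X ν a : ℕ) : ℝ) ^ α) +
      Real.log (ψA (pushforward X ν)) / ((∑ w, ν w : ℕ) : ℝ) ^ α := by
  rw [hψ.log_eq hψA hψB hν, add_div, sum_div]
  congr 1
  refine sum_congr rfl fun a ha => ?_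
  have ha_pos : 0 < ((pushforward X ν a : ℕ) : ℝ) :=
    Nat.cast_pos.2 (Nat.pos_of_ne_zero (mem_filter.1 ha).2)
  rw [Real.div_rpow ha_pos.le (Nat.cast_nonneg _), mul_comm,
    div_mul_div_cancel₀ (Real.rpow_pos_of_pos ha_pos α).ne']

theorem tendsto_log_div_rpow [Fintype B] (hψ : IsCombinatorialCocycle X Y ψW ψA ψB)
    (hψA : ∀ ν, ν ≠ 0 → ψA ν ≠ 0) (hψB : ∀ ν, ν ≠ 0 → ψB ν ≠ 0)
    (hA : IsLogLimit α ψA φA) (hB : IsLogLimit α ψB φB) {ν : ℕ → W → ℕ} {p : W → ℝ}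
    (hν : EmpiricalLimit ν p) (hsupp : ∀ n, Function.support (ν n) ⊆ Function.support p) :
    Tendsto (fun n => Real.log (ψW (ν n)) / ((∑ w, ν n w : ℕ) : ℝ) ^ α) atTop
      (nhds (∑ a with 0 < pushforward X p a, pushforward X p a ^ α *
          φB (fun b => fiberPushforward X Y a p b / pushforward X p a) +
        φA (pushforward X p))) := by
  have hX := hν.map X
  have hlimA := hA.tendsto hX
  simp only [sum_pushforward] at hlimA
  have hlimB (a : A) (ha : a ∈ ({a | 0 < pushforward X p a} : Finset A)) :
      Tendsto (fun n => (((pushforward X (ν n) a : ℕ) : ℝ) / ((∑ w, ν n w : ℕ) : ℝ)) ^ α *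
          (Real.log (ψB (fiberPushforward X Y a (ν n))) / ((pushforward X (ν n) a : ℕ) : ℝ) ^ α))
        atTop (nhds (pushforward X p a ^ α *
          φB (fun b => fiberPushforward X Y a p b / pushforward X p a))) := by
    have ha_pos : 0 < pushforward X p a := (mem_filter.1 ha).2
    have hfreq := (hX.tendsto_frequency a).rpow_const (p := α) (.inl ha_pos.ne')
    have hfiber := hB.tendsto (hν.map_fiber Y ha_pos)
    simp only [sum_pushforward] at hfreq
    simp only [sum_fiberPushforward] at hfiber
    exact hfreq.mul hfiber
  refine ((tendsto_finsetSum _ hlimB).add hlimA).congr' ?_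
  filter_upwards [hν.eventually_magnitude_ne_zero,
    hν.eventually_pushforward_ne_zero_iff hsupp X] with n hn hfibers
  simp only [hψ.log_div_rpow_eq hψA hψB α hn, hfibers]

end IsCombinatorialCocycle

theorem asymptotic_cocycle_transfer_general [Fintype B]
    (hψA : ∀ ν, ν ≠ 0 → ψA ν ≠ 0) (hψB : ∀ ν, ν ≠ 0 → ψB ν ≠ 0)
    (hψ : IsCombinatorialCocycle X Y ψW ψA ψB)
    (hW : IsLogLimit α ψW φW) (hA : IsLogLimit α ψA φA) (hB : IsLogLimit α ψB φB)
    {p : W → ℝ} (hp : p ∈ stdSimplex ℝ W) :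
    φW p = ∑ a with 0 < pushforward X p a, pushforward X p a ^ α *
        φB (fun b => fiberPushforward X Y a p b / pushforward X p a) +
      φA (pushforward X p) := by
  obtain ⟨ν, hν, hsupp⟩ := exists_empiricalLimit_support_subset hp
  exact tendsto_nhds_unique (hW.tendsto hν)
    (hψ.tendsto_log_div_rpow hψA hψB hA hB hν hsupp)

end Cocycle

/-- Asymptotic transfer of the combinatorial 1-cocycle equation to the probabilistic
α-deformed chain rule.  Here `W` is the joint variable `XY`, `A` and `B` are the value
spaces of `X` and `Y`, and `ι : W → A × B` is the injection of joint values into the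
product.  If `ψ_W, ψ_A, ψ_B` satisfy the combinatorial cocycle identity and each
`φ` is an `α`-normalized logarithmic limit of the corresponding `ψ` along sequences of
counting functions with empirical frequencies converging to `p`, then `φ` satisfies
the α-deformed chain rule. -/
theorem asymptotic_cocycle_transfer
    {A B W : Type*} [Fintype A] [Fintype B] [Fintype W]
    [DecidableEq A] [DecidableEq B]
    (ι : W → A × B) (hι : Function.Injective ι)
    (α : ℝ) (hα : 0 < α)
    (ψW : (W → ℕ) → ℝ) (ψA : (A → ℕ) → ℝ) (ψB : (B → ℕ) → ℝ)
    (hψWpos : ∀ ν : W → ℕ, ν ≠ 0 → 0 < ψW ν)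
    (hψApos : ∀ ν : A → ℕ, ν ≠ 0 → 0 < ψA ν)
    (hψBpos : ∀ ν : B → ℕ, ν ≠ 0 → 0 < ψB ν)
    -- the combinatorial 1-cocycle identity  ψ_W(ν) = (∏_a ψ_B(Y_*(ν|_{X=a}))) · ψ_A(X_*ν)
    (hcocycle : ∀ ν : W → ℕ, ν ≠ 0 →
      ψW ν =
        (∏ a ∈ univ.filter
            (fun a : A => (∑ w ∈ univ.filter (fun w => (ι w).1 = a), ν w) ≠ 0),
          ψB (fun b : B =>
            ∑ w ∈ univ.filter (fun w => (ι w).1 = a ∧ (ι w).2 = b), ν w)) *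
          ψA (fun a : A => ∑ w ∈ univ.filter (fun w => (ι w).1 = a), ν w))
    (φW : (W → ℝ) → ℝ) (φA : (A → ℝ) → ℝ) (φB : (B → ℝ) → ℝ)
    -- asymptotic relation for the pair (ψ_W, φ_W)
    (hWlim : ∀ p : W → ℝ, (∀ w, 0 ≤ p w) → ∑ w, p w = 1 →
      ∀ ν : ℕ → W → ℕ,
        Tendsto (fun n => ∑ w, ν n w) atTop atTop →
        (∀ w, Tendsto (fun n => (ν n w : ℝ) / ((∑ u, ν n u : ℕ) : ℝ)) atTop (nhds (p w))) →
        Tendsto (fun n => Real.log (ψW (ν n)) / ((∑ u, ν n u : ℕ) : ℝ) ^ α)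
          atTop (nhds (φW p)))
    -- asymptotic relation for the pair (ψ_A, φ_A)
    (hAlim : ∀ p : A → ℝ, (∀ a, 0 ≤ p a) → ∑ a, p a = 1 →
      ∀ ν : ℕ → A → ℕ,
        Tendsto (fun n => ∑ a, ν n a) atTop atTop →
        (∀ a, Tendsto (fun n => (ν n a : ℝ) / ((∑ u, ν n u : ℕ) : ℝ)) atTop (nhds (p a))) →
        Tendsto (fun n => Real.log (ψA (ν n)) / ((∑ u, ν n u : ℕ) : ℝ) ^ α)
          atTop (nhds (φA p)))
    -- asymptotic relation for the pair (ψ_B, φ_B)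
    (hBlim : ∀ p : B → ℝ, (∀ b, 0 ≤ p b) → ∑ b, p b = 1 →
      ∀ ν : ℕ → B → ℕ,
        Tendsto (fun n => ∑ b, ν n b) atTop atTop →
        (∀ b, Tendsto (fun n => (ν n b : ℝ) / ((∑ u, ν n u : ℕ) : ℝ)) atTop (nhds (p b))) →
        Tendsto (fun n => Real.log (ψB (ν n)) / ((∑ u, ν n u : ℕ) : ℝ) ^ α)
          atTop (nhds (φB p))) :
    -- conclusion: the α-deformed chain rule for φ
    ∀ p : W → ℝ, (∀ w, 0 ≤ p w) → ∑ w, p w = 1 →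
      φW p =
        (∑ a ∈ univ.filter
            (fun a : A => 0 < ∑ w ∈ univ.filter (fun w => (ι w).1 = a), p w),
          (∑ w ∈ univ.filter (fun w => (ι w).1 = a), p w) ^ α *
            φB (fun b : B =>
              (∑ w ∈ univ.filter (fun w => (ι w).1 = a ∧ (ι w).2 = b), p w) /
                ∑ w ∈ univ.filter (fun w => (ι w).1 = a), p w)) +
          φA (fun a : A => ∑ w ∈ univ.filter (fun w => (ι w).1 = a), p w) := by
  intro p hp_nonneg hp_sum
  exact asymptotic_cocycle_transfer_general (fun ν hν => (hψApos ν hν).ne')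
    (fun ν hν => (hψBpos ν hν).ne') hcocycle hWlim hAlim hBlim ⟨hp_nonneg, hp_sum⟩
end
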